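/- For every real number x, the determinant of the symmetric 7×7 real matrix G(x) is nonzero, where the rows of G(x) are: (7, 1, 3x−10, x−4, x−4, 3x−10, x²−9x+20); (1, 7, x−4, 3x−10, 3x−10, x−4, x²−9x+20); (3x−10, x−4, 7x²−40x+66, x²−8x+18, 3x²−20x+34, x²−8x+16, 3x³−33x²+126x−166); (x−4, 3x−10, x²−8x+18, 7x²−40x+66, x²−8x+16, 3x²−20x+34, 3x³−33x²+126x−166); (x−4, 3x−10, 3x²−20x+34, x²−8x+16, 7x²−40x+66, x²−8x+18, 3x³−33x²+126x−166); (3x−10, x−4, x²−8x+16, 3x²−20x+34, x²−8x+18, 7x²−40x+66, 3x³−33x²+126x−166); (x²−9x+20, x²−9x+20, 3x³−33x²+126x−166, 3x³−33x²+126x−166, 3x³−33x²+126x−166, 3x³−33x²+126x−166, 7x⁴−94x³+499x²−1232x+1186). In particular G(N) is invertible for every natural number N. -/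

import Mathlib

/-- The Gram matrix of the seven intersection matrices of the Nykamp–Zhao homogeneous
coherent configuration, as a function of the (real) parameter `x` (the number of
vertices `N`). -/
def nykampZhaoGram (x : ℝ) : Matrix (Fin 7) (Fin 7) ℝ :=
  !![7, 1, 3 * x - 10, x - 4, x - 4, 3 * x - 10, x ^ 2 - 9 * x + 20;
     1, 7, x - 4, 3 * x - 10, 3 * x - 10, x - 4, x ^ 2 - 9 * x + 20;
     3 * x - 10, x - 4, 7 * x ^ 2 - 40 * x + 66, x ^ 2 - 8 * x + 18,
       3 * x ^ 2 - 20 * x + 34, x ^ 2 - 8 * x + 16,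
       3 * x ^ 3 - 33 * x ^ 2 + 126 * x - 166;
     x - 4, 3 * x - 10, x ^ 2 - 8 * x + 18, 7 * x ^ 2 - 40 * x + 66,
       x ^ 2 - 8 * x + 16, 3 * x ^ 2 - 20 * x + 34,
       3 * x ^ 3 - 33 * x ^ 2 + 126 * x - 166;
     x - 4, 3 * x - 10, 3 * x ^ 2 - 20 * x + 34, x ^ 2 - 8 * x + 16,
       7 * x ^ 2 - 40 * x + 66, x ^ 2 - 8 * x + 18,
       3 * x ^ 3 - 33 * x ^ 2 + 126 * x - 166;
     3 * x - 10, x - 4, x ^ 2 - 8 * x + 16, 3 * x ^ 2 - 20 * x + 34,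
       x ^ 2 - 8 * x + 18, 7 * x ^ 2 - 40 * x + 66,
       3 * x ^ 3 - 33 * x ^ 2 + 126 * x - 166;
     x ^ 2 - 9 * x + 20, x ^ 2 - 9 * x + 20, 3 * x ^ 3 - 33 * x ^ 2 + 126 * x - 166,
       3 * x ^ 3 - 33 * x ^ 2 + 126 * x - 166, 3 * x ^ 3 - 33 * x ^ 2 + 126 * x - 166,
       3 * x ^ 3 - 33 * x ^ 2 + 126 * x - 166,
       7 * x ^ 4 - 94 * x ^ 3 + 499 * x ^ 2 - 1232 * x + 1186]

/-!
The matrix `G(x)` commutes with the permutations `(2 5)(3 4)` and `(0 1)(2 3)(4 5)` of the indices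
`0, …, 6`. A matrix commuting with an involution preserves the invariant and the anti-invariant
vectors, so its determinant is the product of the determinants of the two restrictions. Doing this
for both permutations splits the determinant into two `2 × 2` determinants and a `3 × 3` one, that
is, into three quadratic polynomials and one of degree six, all of which are positive on `ℝ`.
-/

section Involution

open Matrix

variable {R k m n : Type*} [CommRing R]

/-- The matrix by which a matrix `M` commuting with the involution `σ` acts on the `σ`-invariant
vectors, in the basis consisting of the `e (f i)` and the `e (g j) + e (σ (g j))`; here `f`
enumerates the fixed points of `σ` and `g` represents its orbits of size two. -/
def invariantPart (M : Matrix n n R) (σ : n → n) (f : k → n) (g : m → n) :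
    Matrix (k ⊕ m) (k ⊕ m) R :=
  fromBlocks (M.submatrix f f) (M.submatrix f g + M.submatrix f (σ ∘ g))
    (M.submatrix g f) (M.submatrix g g + M.submatrix g (σ ∘ g))

/-- The matrix by which a matrix `M` commuting with the involution `σ` acts on the
`σ`-anti-invariant vectors, in the basis consisting of the `e (g j) - e (σ (g j))`; here `g`
represents the orbits of size two of `σ`. -/
def antiinvariantPart (M : Matrix n n R) (σ : n → n) (g : m → n) : Matrix m m R :=
  M.submatrix g g - M.submatrix g (σ ∘ g)

variable [Fintype k] [Fintype m] [Fintype n] [DecidableEq k] [DecidableEq m] [DecidableEq n]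

theorem det_fromBlocks_swap_invariant (K : Matrix k k R) (U : Matrix k m R) (V : Matrix m k R)
    (A B : Matrix m m R) :
    (fromBlocks (fromBlocks K U V A) (fromRows U B) (fromCols V B) A).det =
      (A - B).det * (fromBlocks K (U + U) V (A + B)).det := by
  set J : Matrix m (k ⊕ m) R := fromCols 0 1
  have triangularize :
      fromBlocks 1 0 (-J) 1 * fromBlocks (fromBlocks K U V A) (fromRows U B) (fromCols V B) A *
          fromBlocks 1 0 J 1 =
        fromBlocks (fromBlocks K (U + U) V (A + B)) (fromRows U B) 0 (A - B) := by
    have diagonal_block : -J * fromRows U B + A = A - B := by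
      simp [J, fromCols_mul_fromRows, sub_eq_neg_add]
    have row_difference : -J * fromBlocks K U V A + fromCols V B = -((A - B) * J) := by
      ext i (j | j) <;> simp [J, fromCols_mul_fromBlocks, sub_eq_neg_add]
    have column_sum : fromBlocks K U V A + fromRows U B * J =
        fromBlocks K (U + U) V (A + B) := by
      ext (i | i) (j | j) <;> simp [J]
    simp only [fromBlocks_multiply, Matrix.one_mul, Matrix.zero_mul, Matrix.mul_one,
      Matrix.mul_zero, add_zero, zero_add, diagonal_block, row_difference, column_sum,
      neg_add_cancel]
  simpa [det_fromBlocks_zero₁₂, det_fromBlocks_zero₂₁, mul_comm] using congrArg det triangularize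

theorem det_eq_det_antiinvariantPart_mul_det_invariantPart {M : Matrix n n R} {σ : n → n}
    {f : k → n} {g : m → n} (hM : M.submatrix σ σ = M) (hσ : Function.Involutive σ)
    (hf : ∀ i, σ (f i) = f i)
    (hfg : Function.Bijective (Sum.elim (Sum.elim f g) (σ ∘ g))) :
    M.det = (antiinvariantPart M σ g).det * (invariantPart M σ f g).det := by
  have entry_swap (i j : n) : M (σ i) (σ j) = M i j := congrFun₂ hM i j
  have col_swap (i : k) (j : n) : M (f i) (σ j) = M (f i) j := by
    simpa [hf] using entry_swap (f i) j
  have row_swap (i : n) (j : k) : M (σ i) (f j) = M i (f j) := by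
    simpa [hf] using entry_swap i (f j)
  have diag_swap (i j : n) : M (σ i) j = M i (σ j) := by
    simpa [hσ j] using entry_swap i (σ j)
  let e := Equiv.ofBijective _ hfg
  have hU : M.submatrix f (σ ∘ g) = M.submatrix f g := by
    ext i j
    exact col_swap i (g j)
  have blocks : M.submatrix e e =
      fromBlocks
        (fromBlocks (M.submatrix f f) (M.submatrix f g) (M.submatrix g f) (M.submatrix g g))
        (fromRows (M.submatrix f g) (M.submatrix g (σ ∘ g)))
        (fromCols (M.submatrix g f) (M.submatrix g (σ ∘ g))) (M.submatrix g g) := by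
    ext ((i | i) | i) ((j | j) | j) <;> simp [e, entry_swap, col_swap, row_swap, diag_swap]
  rw [← det_submatrix_equiv_self e M, blocks, det_fromBlocks_swap_invariant, antiinvariantPart,
    invariantPart, hU]

end Involution

namespace nykampZhaoGram

open Matrix

/-- The involution `(2 5)(3 4)`, a symmetry of `nykampZhaoGram`. -/
def outerSwap : Fin 7 → Fin 7 := ![0, 1, 5, 4, 3, 2, 6]

/-- The restriction of `nykampZhaoGram x` to the vectors invariant under `(2 5)(3 4)`, in the basis
`e 0`, `e 1`, `e 6`, `e 2 + e 5`, `e 3 + e 4`. -/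
def outerInvariant (x : ℝ) : Matrix (Fin 3 ⊕ Fin 2) (Fin 3 ⊕ Fin 2) ℝ :=
  invariantPart (nykampZhaoGram x) outerSwap ![0, 1, 6] ![2, 3]

/-- The involution that `(0 1)(2 3)(4 5)`, a symmetry of `nykampZhaoGram`, induces on the basis of
`outerInvariant`. -/
def innerSwap : Fin 3 ⊕ Fin 2 → Fin 3 ⊕ Fin 2 := Sum.map ![1, 0, 2] ![1, 0]

theorem submatrix_outerSwap (x : ℝ) :
    (nykampZhaoGram x).submatrix outerSwap outerSwap = nykampZhaoGram x := by
  ext i j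
  fin_cases i <;> fin_cases j <;> rfl

theorem outerSwap_involutive : Function.Involutive outerSwap := by
  unfold Function.Involutive
  decide

theorem innerSwap_involutive : Function.Involutive innerSwap := by
  unfold Function.Involutive
  decide

theorem antiinvariantPart_outerSwap (x : ℝ) :
    antiinvariantPart (nykampZhaoGram x) outerSwap ![2, 3] =
      !![7 * x ^ 2 - 40 * x + 66 - (x ^ 2 - 8 * x + 16),
           x ^ 2 - 8 * x + 18 - (3 * x ^ 2 - 20 * x + 34);
         x ^ 2 - 8 * x + 18 - (3 * x ^ 2 - 20 * x + 34),
           7 * x ^ 2 - 40 * x + 66 - (x ^ 2 - 8 * x + 16)] := by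
  ext i j
  fin_cases i <;> fin_cases j <;> rfl

theorem outerInvariant_eq_fromBlocks (x : ℝ) :
    outerInvariant x = fromBlocks
      !![7, 1, x ^ 2 - 9 * x + 20;
         1, 7, x ^ 2 - 9 * x + 20;
         x ^ 2 - 9 * x + 20, x ^ 2 - 9 * x + 20,
           7 * x ^ 4 - 94 * x ^ 3 + 499 * x ^ 2 - 1232 * x + 1186]
      !![3 * x - 10 + (3 * x - 10), x - 4 + (x - 4);
         x - 4 + (x - 4), 3 * x - 10 + (3 * x - 10);
         3 * x ^ 3 - 33 * x ^ 2 + 126 * x - 166 + (3 * x ^ 3 - 33 * x ^ 2 + 126 * x - 166),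
           3 * x ^ 3 - 33 * x ^ 2 + 126 * x - 166 + (3 * x ^ 3 - 33 * x ^ 2 + 126 * x - 166)]
      !![3 * x - 10, x - 4, 3 * x ^ 3 - 33 * x ^ 2 + 126 * x - 166;
         x - 4, 3 * x - 10, 3 * x ^ 3 - 33 * x ^ 2 + 126 * x - 166]
      !![7 * x ^ 2 - 40 * x + 66 + (x ^ 2 - 8 * x + 16),
           x ^ 2 - 8 * x + 18 + (3 * x ^ 2 - 20 * x + 34);
         x ^ 2 - 8 * x + 18 + (3 * x ^ 2 - 20 * x + 34),
           7 * x ^ 2 - 40 * x + 66 + (x ^ 2 - 8 * x + 16)] := by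
  ext (i | i) (j | j) <;> fin_cases i <;> fin_cases j <;> rfl

theorem submatrix_innerSwap (x : ℝ) :
    (outerInvariant x).submatrix innerSwap innerSwap = outerInvariant x := by
  rw [outerInvariant_eq_fromBlocks]
  ext (i | i) (j | j) <;> fin_cases i <;> fin_cases j <;> rfl

theorem antiinvariantPart_innerSwap (x : ℝ) :
    antiinvariantPart (outerInvariant x) innerSwap ![.inl 0, .inr 0] =
      !![7 - 1, 3 * x - 10 + (3 * x - 10) - (x - 4 + (x - 4));
         3 * x - 10 - (x - 4),
           7 * x ^ 2 - 40 * x + 66 + (x ^ 2 - 8 * x + 16)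
             - (x ^ 2 - 8 * x + 18 + (3 * x ^ 2 - 20 * x + 34))] := by
  rw [outerInvariant_eq_fromBlocks]
  ext i j
  fin_cases i <;> fin_cases j <;> rfl

theorem invariantPart_innerSwap_submatrix_finSumFinEquiv (x : ℝ) :
    (invariantPart (outerInvariant x) innerSwap ![.inl 2] ![.inl 0, .inr 0]).submatrix
        finSumFinEquiv.symm finSumFinEquiv.symm =
      !![7 * x ^ 4 - 94 * x ^ 3 + 499 * x ^ 2 - 1232 * x + 1186,
           x ^ 2 - 9 * x + 20 + (x ^ 2 - 9 * x + 20),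
           3 * x ^ 3 - 33 * x ^ 2 + 126 * x - 166 + (3 * x ^ 3 - 33 * x ^ 2 + 126 * x - 166)
             + (3 * x ^ 3 - 33 * x ^ 2 + 126 * x - 166
               + (3 * x ^ 3 - 33 * x ^ 2 + 126 * x - 166));
         x ^ 2 - 9 * x + 20, 7 + 1, 3 * x - 10 + (3 * x - 10) + (x - 4 + (x - 4));
         3 * x ^ 3 - 33 * x ^ 2 + 126 * x - 166, 3 * x - 10 + (x - 4),
           7 * x ^ 2 - 40 * x + 66 + (x ^ 2 - 8 * x + 16)
             + (x ^ 2 - 8 * x + 18 + (3 * x ^ 2 - 20 * x + 34))] := by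
  rw [outerInvariant_eq_fromBlocks]
  ext i j
  fin_cases i <;> fin_cases j <;> rfl

theorem det_antiinvariantPart_outerSwap (x : ℝ) :
    (antiinvariantPart (nykampZhaoGram x) outerSwap ![2, 3]).det =
      4 * (2 * x ^ 2 - 10 * x + 17) * (4 * x ^ 2 - 22 * x + 33) := by
  rw [antiinvariantPart_outerSwap, det_fin_two_of]
  ring

theorem det_antiinvariantPart_innerSwap (x : ℝ) :
    (antiinvariantPart (outerInvariant x) innerSwap ![.inl 0, .inr 0]).det =
      4 * (4 * x ^ 2 - 18 * x + 27) := by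
  rw [antiinvariantPart_innerSwap, det_fin_two_of]
  ring

theorem det_invariantPart_innerSwap (x : ℝ) :
    (invariantPart (outerInvariant x) innerSwap ![.inl 2] ![.inl 0, .inr 0]).det =
      4 * (58 * (x - 3) ^ 6 + 34 * (x - 3) ^ 5 + 185 * (x - 3) ^ 4 + 140 * (x - 3) ^ 3
        + 207 * (x - 3) ^ 2 - 36 * (x - 3) + 136) := by
  rw [← det_submatrix_equiv_self finSumFinEquiv.symm,
    invariantPart_innerSwap_submatrix_finSumFinEquiv, det_fin_three]
  simp only [of_apply, cons_val]
  ring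

theorem det_eq (x : ℝ) :
    (nykampZhaoGram x).det =
      64 * (2 * x ^ 2 - 10 * x + 17) * (4 * x ^ 2 - 22 * x + 33) * (4 * x ^ 2 - 18 * x + 27) *
        (58 * (x - 3) ^ 6 + 34 * (x - 3) ^ 5 + 185 * (x - 3) ^ 4 + 140 * (x - 3) ^ 3
          + 207 * (x - 3) ^ 2 - 36 * (x - 3) + 136) := by
  have outer : (nykampZhaoGram x).det =
      (antiinvariantPart (nykampZhaoGram x) outerSwap ![2, 3]).det * (outerInvariant x).det :=
    det_eq_det_antiinvariantPart_mul_det_invariantPart (submatrix_outerSwap x)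
      outerSwap_involutive (by decide) (by decide)
  have inner : (outerInvariant x).det =
      (antiinvariantPart (outerInvariant x) innerSwap ![.inl 0, .inr 0]).det *
        (invariantPart (outerInvariant x) innerSwap ![.inl 2] ![.inl 0, .inr 0]).det :=
    det_eq_det_antiinvariantPart_mul_det_invariantPart (submatrix_innerSwap x)
      innerSwap_involutive (by decide) (by decide)
  rw [outer, inner, det_antiinvariantPart_outerSwap, det_antiinvariantPart_innerSwap,
    det_invariantPart_innerSwap]
  ring

theorem sextic_pos (t : ℝ) :
    0 < 58 * t ^ 6 + 34 * t ^ 5 + 185 * t ^ 4 + 140 * t ^ 3 + 207 * t ^ 2 - 36 * t + 136 :=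
  -- The three squares absorb the terms of odd degree.
  calc
    0 < 24 * t ^ 6 + 73 / 2 * t ^ 4 + 154 * t ^ 2 + 118 + 17 / 2 * (t ^ 2 * (2 * t + 1)) ^ 2
        + 35 * (t * (2 * t + 1)) ^ 2 + 18 * (t - 1) ^ 2 := by positivity
    _ = _ := by ring

theorem det_pos (x : ℝ) : 0 < (nykampZhaoGram x).det := by
  have outer_factor_pos : 0 < 2 * x ^ 2 - 10 * x + 17 := by nlinarith [sq_nonneg (2 * x - 5)]
  have outer_factor_pos' : 0 < 4 * x ^ 2 - 22 * x + 33 := by nlinarith [sq_nonneg (4 * x - 11)]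
  have inner_factor_pos : 0 < 4 * x ^ 2 - 18 * x + 27 := by nlinarith [sq_nonneg (4 * x - 9)]
  have sextic_factor_pos := sextic_pos (x - 3)
  rw [det_eq]
  positivity

end nykampZhaoGram

/-- the determinant of the Gram matrix `G(x)` is nonzero for every real `x`;
in particular `G(N)` is invertible for every natural number `N`. -/
theorem nykampZhaoGram_det_ne_zero :
    (∀ x : ℝ, (nykampZhaoGram x).det ≠ 0) ∧
    (∀ N : ℕ, IsUnit (nykampZhaoGram (N : ℝ))) := by
  have det_ne_zero (x : ℝ) : (nykampZhaoGram x).det ≠ 0 := (nykampZhaoGram.det_pos x).ne'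
  exact ⟨det_ne_zero, fun N => (Matrix.isUnit_iff_isUnit_det _).mpr (det_ne_zero N).isUnit⟩
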